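/- Let p be an odd prime and let λ be a bar-partition of n whose p-bar core has size r < p and whose p-bar weight is w (so n = r + pw). Then ν_p(n!) − ν_p(H(λ)) = ν_p((pw)!) − ν_p(H(λ^[p̄])), where H(ν) denotes the product of all bar lengths of a bar-partition ν, λ^[p̄] is the p-bar cocore of λ, and ν_p is the p-adic valuation. -/

import Mathlib

open scoped BigOperators

/-- A bar-partition: a finite set of distinct positive parts. -/
structure BarPartition where
  parts : Finset ℕ
  zero_not_mem : 0 ∉ parts

namespace BarPartition

/-- The size `|λ|` of a bar-partition: the sum of its parts. -/
def size (l : BarPartition) : ℕ := ∑ a ∈ l.parts, a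

/-- The length `ℓ(λ)` of a bar-partition: its number of parts. -/
def length (l : BarPartition) : ℕ := l.parts.card

/-- The sign `sgn(λ) = (-1)^(|λ| - ℓ(λ))` of a bar-partition. -/
def sgn (l : BarPartition) : ℤ := (-1) ^ (l.size - l.length)

/-- The empty bar-partition. -/
def empty : BarPartition := ⟨∅, by simp⟩

end BarPartition

/-- One `t`-bar removal step: replace a part `a > t` by `a - t` (if `a - t` is not already a
part), delete a part equal to `t`, or delete two parts whose sum is `t`. -/
def BarRemoval (t : ℕ) (μ ν : BarPartition) : Prop :=
  (∃ a ∈ μ.parts, t < a ∧ a - t ∉ μ.parts ∧ ν.parts = insert (a - t) (μ.parts.erase a)) ∨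
  (t ∈ μ.parts ∧ ν.parts = μ.parts.erase t) ∨
  (∃ a ∈ μ.parts, ∃ b ∈ μ.parts, a ≠ b ∧ a + b = t ∧ ν.parts = (μ.parts.erase a).erase b)

/-- A `t`-bar core: a bar-partition admitting no `t`-bar removal. -/
def IsBarCore (t : ℕ) (κ : BarPartition) : Prop := ∀ ν, ¬ BarRemoval t κ ν

/-- `κ` is the `t`-bar core of `λ`: it is obtained from `λ` by a (maximal) sequence of `t`-bar
removals and admits no further removal. -/
def IsBarCoreOf (t : ℕ) (l κ : BarPartition) : Prop :=
  Relation.ReflTransGen (BarRemoval t) l κ ∧ IsBarCore t κ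

/-- `λ` has empty `t`-bar core. -/
def HasEmptyBarCore (t : ℕ) (l : BarPartition) : Prop :=
  Relation.ReflTransGen (BarRemoval t) l BarPartition.empty

/-- The twisted runner at `r` (for `1 ≤ r ≤ (t-1)/2`) of the `t`-bar-abacus of `λ`, as a set
of integers: position `i ≥ 0` (above the fence) carries a bead iff `t*i + r` is a part of `λ`,
and position `i < 0` (slot `j = -(i+1)` below the fence) carries a bead iff `t*j + (t - r)` is
*not* a part of `λ` (beads and empty slots of runner `t - r` are interchanged). -/
def twistedRunner (t r : ℕ) (l : BarPartition) : Set ℤ :=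
  {i : ℤ | (0 ≤ i ∧ t * i.toNat + r ∈ l.parts) ∨
           (i < 0 ∧ t * (-(i + 1)).toNat + (t - r) ∉ l.parts)}

/-- Two bar-partitions have the same `t`-bar quotient: the runners `0` agree, and for each
`1 ≤ r ≤ (t-1)/2` the twisted runners differ by a shift (the shift by the unique balancing
integer produces the Frobenius symbol of the quotient component, so shift-equivalent twisted
runners are exactly those with equal quotient component). -/
def HasSameBarQuotient (t : ℕ) (l m : BarPartition) : Prop :=
  (∀ k : ℕ, t * k ∈ l.parts ↔ t * k ∈ m.parts) ∧
  ∀ r : ℕ, 1 ≤ r → 2 * r < t →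
    ∃ c : ℤ, twistedRunner t r m = (fun i => i + c) '' twistedRunner t r l

/-- `m` is the `t`-bar cocore of `l`: the unique bar-partition with empty `t`-bar core and the
same `t`-bar quotient as `l`. -/
def IsBarCocoreOf (t : ℕ) (l m : BarPartition) : Prop :=
  HasEmptyBarCore t m ∧ HasSameBarQuotient t l m

/-- A fixed algebraic closure of `ℚ`. -/
abbrev Qbar := AlgebraicClosure ℚ

/-- `σ` is a `σ_p`-type automorphism of `ℚ̄`: it raises every root of unity of order coprime
to `p` to its `p`-th power, and fixes every root of unity of `p`-power order. -/
def IsSigmaPType (p : ℕ) (σ : Qbar ≃ₐ[ℚ] Qbar) : Prop :=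
  (∀ (ζ : Qbar) (n : ℕ), 0 < n → Nat.Coprime n p → ζ ^ n = 1 → σ ζ = ζ ^ p) ∧
  (∀ (ζ : Qbar) (k : ℕ), ζ ^ (p ^ k) = 1 → σ ζ = ζ)

/-- The discriminant `D_λ` attached to a bar-partition `λ` of `n` with `k` parts:
`2·(−1)^((n−k+1)/2)·λ₁⋯λ_k` if `n − k` is odd, and `(−1)^((n−k)/2)·λ₁⋯λ_k` if `n − k` is
even. -/
def barDisc (l : BarPartition) : ℤ :=
  if (l.size - l.length) % 2 = 1 then
    2 * (-1) ^ ((l.size - l.length + 1) / 2) * ∏ a ∈ l.parts, (a : ℤ)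
  else
    (-1) ^ ((l.size - l.length) / 2) * ∏ a ∈ l.parts, (a : ℤ)

/-- The product `H(ν)` of all bar lengths of a bar-partition `ν`: for each part `a`, the bars
of the row of `a` have lengths `a + b` for the parts `b < a`, together with the elements of
`{1, …, a}` that are not of the form `a − b` for a part `b < a`. -/
def barLengthsProd (l : BarPartition) : ℕ :=
  ∏ a ∈ l.parts,
    ((∏ b ∈ l.parts.filter (· < a), (a + b)) *
      ∏ m ∈ (Finset.Icc 1 a).filter (fun m => ∀ b ∈ l.parts, b < a → m ≠ a - b), m)

/-!
Attach to a bar-partition the antisymmetric set of integers consisting of its parts and of the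
negatives of the positive non-parts. A bar of length `h` is, up to this antisymmetry, a bead that
can be moved `h` steps down to an empty position. Equality of `t`-bar quotients for odd `t` means
that the bead sets agree up to a shift of each runner, and such shifts preserve the moves whose
length is divisible by `t`. So `λ` and its cocore have the same bar lengths divisible by `p`, and
these alone contribute to `ν_p`; likewise `ν_p((r + pw)!) = ν_p((pw)!)` since `r < p`.
-/

namespace BarPartition

/-- The doubled bead set of `λ`: the beads of `λ` on the positive integers together with their
complement reflected to the negative integers. Read modulo `t` it shows the twisted runners of the
`t`-bar-abacus for all `t` at once, and it is antisymmetric under `x ↦ -x` away from `0`. -/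
def doubledBeads (l : BarPartition) : Set ℤ :=
  {x | 0 < x ∧ x.natAbs ∈ l.parts ∨ x < 0 ∧ x.natAbs ∉ l.parts}

variable {l : BarPartition} {h : ℕ}

theorem pos_of_mem_parts {a : ℕ} (ha : a ∈ l.parts) : 0 < a :=
  Nat.pos_of_ne_zero fun h0 => l.zero_not_mem (h0 ▸ ha)

theorem natCast_mem_doubledBeads {a : ℕ} : (a : ℤ) ∈ l.doubledBeads ↔ a ∈ l.parts := by
  simpa [doubledBeads, Int.natCast_nonneg a |>.not_gt] using pos_of_mem_parts

theorem zero_notMem_doubledBeads : 0 ∉ l.doubledBeads := by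
  simp [doubledBeads]

theorem neg_mem_doubledBeads {x : ℤ} (hx : x ≠ 0) :
    -x ∈ l.doubledBeads ↔ x ∉ l.doubledBeads := by
  grind [doubledBeads]

theorem exists_mem_parts_of_mem_doubledBeads {x : ℤ} (hx : 0 < x) (hl : x ∈ l.doubledBeads) :
    ∃ a ∈ l.parts, (a : ℤ) = x := by
  grind [doubledBeads]

theorem mem_twistedRunner_iff {t r : ℕ} (hrt : r < t) {i : ℤ} :
    i ∈ twistedRunner t r l ↔ t * i + r ∈ l.doubledBeads := by
  rcases le_or_gt 0 i with hi | hi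
  · lift i to ℕ using hi
    rw [show (t : ℤ) * i + r = (t * i + r : ℕ) by push_cast; rfl, natCast_mem_doubledBeads]
    simp [twistedRunner]
  · obtain ⟨k, rfl⟩ : ∃ k : ℕ, i = -k - 1 := ⟨(-(i + 1)).toNat, by omega⟩
    rw [show (t : ℤ) * (-k - 1) + r = -(t * k + (t - r) : ℕ) by
        push_cast [Nat.cast_sub hrt.le]; ring,
      neg_mem_doubledBeads (by omega), natCast_mem_doubledBeads]
    simp [twistedRunner, hi, show ¬ (1 : ℤ) ≤ -k by lia]

/-- The beads of the doubled bead set that can be moved down to an empty position `h` steps below: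
the heads of its hooks of length `h`. -/
def hookHeads (l : BarPartition) (h : ℕ) : Set ℤ :=
  {x | x ∈ l.doubledBeads ∧ x - h ∉ l.doubledBeads}

theorem sub_mem_hookHeads {x : ℤ} (hx : x ≠ 0) (hxh : x ≠ h) :
    h - x ∈ l.hookHeads h ↔ x ∈ l.hookHeads h := by
  have hsub : (h : ℤ) - x ∈ l.doubledBeads ↔ x - h ∉ l.doubledBeads := by
    rw [← neg_sub, neg_mem_doubledBeads (sub_ne_zero.mpr hxh)]
  have hneg : h - x - h ∉ l.doubledBeads ↔ x ∈ l.doubledBeads := by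
    rw [sub_sub_cancel_left, neg_mem_doubledBeads hx, not_not]
  rw [hookHeads, Set.mem_ofPred_eq, Set.mem_ofPred_eq, hsub, hneg, and_comm]

theorem natCast_mem_hookHeads_self : (h : ℤ) ∈ l.hookHeads h ↔ h ∈ l.parts := by
  simp [hookHeads, natCast_mem_doubledBeads, zero_notMem_doubledBeads]

theorem finite_hookHeads : (l.hookHeads h).Finite := by
  let positive : Set ℤ := (fun a : ℕ => (a : ℤ)) '' l.parts
  have hpositive : positive.Finite := l.parts.finite_toSet.image _
  refine (hpositive.union (hpositive.image fun x : ℤ => (h : ℤ) - x)).subset fun x hx => ?_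
  rcases lt_or_ge 0 x with h0 | h0
  · exact Or.inl (exists_mem_parts_of_mem_doubledBeads h0 hx.1)
  · have hx0 : x ≠ 0 := fun hx0 => zero_notMem_doubledBeads (hx0 ▸ hx.1)
    have hpartner : h - x ∈ l.hookHeads h := (sub_mem_hookHeads hx0 (by lia)).mpr hx
    exact Or.inr ⟨h - x, exists_mem_parts_of_mem_doubledBeads (by lia) hpartner.1, by simp⟩

/-- The bar lengths in the row of the part `a`. They are distinct, so a finset records them. -/
def rowBarLengths (l : BarPartition) (a : ℕ) : Finset ℕ :=
  (l.parts.filter (· < a)).map (addLeftEmbedding a) ∪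
    (Finset.Icc 1 a).filter fun k => ∀ b ∈ l.parts, b < a → k ≠ a - b

/-- The multiset of all bar lengths. -/
def barLengths (l : BarPartition) : Multiset ℕ :=
  ∑ a ∈ l.parts, (l.rowBarLengths a).val

theorem prod_barLengths : l.barLengths.prod = barLengthsProd l := by
  have hdisj (a : ℕ) : Disjoint ((l.parts.filter (· < a)).map (addLeftEmbedding a))
      ((Finset.Icc 1 a).filter fun k => ∀ b ∈ l.parts, b < a → k ≠ a - b) := by
    simp only [Finset.disjoint_left, Finset.mem_map, Finset.mem_filter, Finset.mem_Icc,
      addLeftEmbedding_apply]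
    grind [pos_of_mem_parts]
  simp only [barLengths, barLengthsProd, rowBarLengths, Multiset.prod_sum, Finset.prod_val,
    Finset.prod_union (hdisj _), Finset.prod_map, addLeftEmbedding_apply, id]

theorem mem_rowBarLengths {a : ℕ} :
    h ∈ l.rowBarLengths a ↔ 0 < h ∧ h < 2 * a ∧ (a - h : ℤ) ∉ l.doubledBeads := by
  simp only [rowBarLengths, Finset.mem_union, Finset.mem_map, Finset.mem_filter, Finset.mem_Icc,
    addLeftEmbedding_apply, doubledBeads, Set.mem_ofPred_eq]
  grind [pos_of_mem_parts]

theorem zero_notMem_barLengths : 0 ∉ l.barLengths := fun h0 => by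
  obtain ⟨a, -, ha⟩ := Multiset.mem_sum.mp h0
  exact (mem_rowBarLengths.mp ha).1.false

theorem count_barLengths :
    l.barLengths.count h = (l.parts.filter (h ∈ l.rowBarLengths ·)).card := by
  rw [barLengths, Multiset.count_sum', Finset.card_filter]
  exact Finset.sum_congr rfl fun a _ => Multiset.count_eq_of_nodup (Finset.nodup _)

theorem ncard_hookHeads_lt_two_mul (hh : 0 < h) :
    {x ∈ l.hookHeads h | h < 2 * x}.ncard = l.barLengths.count h := by
  have hcast : {x ∈ l.hookHeads h | h < 2 * x} =
      (fun a : ℕ => (a : ℤ)) '' (l.parts.filter (h ∈ l.rowBarLengths ·) : Set ℕ) := by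
    ext x
    simp only [Finset.coe_filter, mem_rowBarLengths]
    constructor
    · rintro ⟨⟨hx, hxh⟩, hlt⟩
      obtain ⟨a, ha, rfl⟩ := exists_mem_parts_of_mem_doubledBeads (by lia) hx
      exact ⟨a, ⟨ha, hh, by lia, hxh⟩, rfl⟩
    · rintro ⟨a, ⟨ha, -, hlt, hah⟩, rfl⟩
      exact ⟨⟨natCast_mem_doubledBeads.mpr ha, hah⟩, by lia⟩
  rw [hcast, Set.ncard_image_of_injective _ Nat.cast_injective, Set.ncard_coe_finset,
    count_barLengths]

theorem ncard_hookHeads_two_mul_eq (hh : 0 < h) :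
    {x ∈ l.hookHeads h | 2 * x = h}.ncard = (l.parts.filter (2 * · = h)).card := by
  have hcast : {x ∈ l.hookHeads h | 2 * x = h} =
      (fun a : ℕ => (a : ℤ)) '' (l.parts.filter (2 * · = h) : Set ℕ) := by
    ext x
    simp only [Finset.coe_filter]
    constructor
    · rintro ⟨⟨hx, -⟩, heq⟩
      obtain ⟨a, ha, rfl⟩ := exists_mem_parts_of_mem_doubledBeads (by lia) hx
      exact ⟨a, ⟨ha, by lia⟩, rfl⟩
    · rintro ⟨a, ⟨ha, rfl⟩, rfl⟩
      have hbead : (a : ℤ) ∈ l.doubledBeads := natCast_mem_doubledBeads.mpr ha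
      refine ⟨⟨hbead, ?_⟩, by simp⟩
      rwa [show (a : ℤ) - (2 * a : ℕ) = -a by push_cast; ring, neg_mem_doubledBeads (by lia),
        not_not]
  rw [hcast, Set.ncard_image_of_injective _ Nat.cast_injective, Set.ncard_coe_finset]

/- The reflection `x ↦ h - x` exchanges the heads above and below `h / 2`, except that `h`, a head
when it is a part, would go to `0`, which is never a bead. -/
theorem ncard_hookHeads_two_mul_lt (hh : 0 < h) :
    {x ∈ l.hookHeads h | 2 * x < h}.ncard + (if h ∈ l.parts then 1 else 0) =
      l.barLengths.count h := by
  let upper : Set ℤ := {x ∈ l.hookHeads h | h < 2 * x}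
  have hreflect : {x ∈ l.hookHeads h | 2 * x < h} =
      (fun x : ℤ => h - x) '' (upper \ {(h : ℤ)}) := by
    ext x
    constructor
    · rintro ⟨hx, hlt⟩
      have hx0 : x ≠ 0 := fun hx0 => zero_notMem_doubledBeads (hx0 ▸ hx.1)
      exact ⟨h - x, ⟨⟨(sub_mem_hookHeads hx0 (by lia)).mpr hx, by lia⟩, by simpa using hx0⟩,
        sub_sub_cancel _ _⟩
    · rintro ⟨y, ⟨⟨hy, hlt⟩, hyh⟩, rfl⟩
      exact ⟨(sub_mem_hookHeads (by lia) hyh).mpr hy, by lia⟩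
  rw [hreflect, Set.ncard_image_of_injective _ sub_right_injective, ← ncard_hookHeads_lt_two_mul hh]
  have hmem : (h : ℤ) ∈ upper ↔ h ∈ l.parts :=
    (and_iff_left (by lia)).trans natCast_mem_hookHeads_self
  split_ifs with hpart
  · exact Set.ncard_sdiff_singleton_add_one (hmem.mpr hpart) (finite_hookHeads.sep _)
  · rw [Set.sdiff_singleton_eq_self (mt hmem.mp hpart), add_zero]

theorem ncard_hookHeads (hh : 0 < h) :
    (l.hookHeads h).ncard + (if h ∈ l.parts then 1 else 0) =
      2 * l.barLengths.count h + (l.parts.filter (2 * · = h)).card := by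
  have hfin (P : ℤ → Prop) : {x ∈ l.hookHeads h | P x}.Finite := finite_hookHeads.sep P
  have hsplit : l.hookHeads h = {x ∈ l.hookHeads h | h < 2 * x} ∪
      ({x ∈ l.hookHeads h | 2 * x = h} ∪ {x ∈ l.hookHeads h | 2 * x < h}) := by
    ext x
    simp only [Set.mem_union, Set.mem_ofPred_eq]
    lia
  rw [hsplit, Set.ncard_union_eq (by grind) (hfin _) ((hfin _).union (hfin _)),
    Set.ncard_union_eq (by grind) (hfin _) (hfin _),
    ncard_hookHeads_lt_two_mul hh, ncard_hookHeads_two_mul_eq hh, add_assoc, add_assoc,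
    ncard_hookHeads_two_mul_lt hh]
  ring

end BarPartition

/-- The permutation of `ℤ` that moves, for each `r`, the runner of all `x` whose balanced residue
modulo `t` is `r` by `c r` slots. -/
def runnerShift (t : ℕ) (c : ℤ → ℤ) : ℤ ≃ ℤ where
  toFun x := x + t * c (x.bmod t)
  invFun x := x - t * c (x.bmod t)
  left_inv x := by simp
  right_inv x := by simp

theorem runnerShift_sub_of_dvd {t : ℕ} (c : ℤ → ℤ) {y : ℤ} (hy : (t : ℤ) ∣ y) (x : ℤ) :
    runnerShift t c (x - y) = runnerShift t c x - y := by
  obtain ⟨k, rfl⟩ := hy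
  simp only [runnerShift, Equiv.coe_fn_mk, Int.sub_mul_bmod_self_left, sub_add_eq_add_sub]

namespace HasSameBarQuotient

open BarPartition

variable {t : ℕ} {l m : BarPartition}

theorem mem_parts_iff_of_dvd (hlm : HasSameBarQuotient t l m) {a : ℕ} (ha : t ∣ a) :
    a ∈ l.parts ↔ a ∈ m.parts := by
  obtain ⟨k, rfl⟩ := ha
  exact hlm.1 k

theorem filter_parts_eq (hlm : HasSameBarQuotient t l m) {P : ℕ → Prop} [DecidablePred P]
    (hP : ∀ a, P a → t ∣ a) : l.parts.filter P = m.parts.filter P := by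
  ext a
  simp only [Finset.mem_filter]
  exact and_congr_left fun ha => hlm.mem_parts_iff_of_dvd (hP a ha)

theorem mem_doubledBeads_iff_of_dvd (hlm : HasSameBarQuotient t l m) {x : ℤ} (hx : (t : ℤ) ∣ x) :
    x ∈ m.doubledBeads ↔ x ∈ l.doubledBeads := by
  simp only [doubledBeads, Set.mem_ofPred_eq,
    hlm.mem_parts_iff_of_dvd (Int.natCast_dvd.mp hx)]

theorem exists_runner_shift_of_pos (hlm : HasSameBarQuotient t l m) {r : ℤ} (hr : 0 < r)
    (hrt : 2 * r < t) :
    ∃ c : ℤ, ∀ i : ℤ, t * (i + c) + r ∈ m.doubledBeads ↔ t * i + r ∈ l.doubledBeads := by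
  lift r to ℕ using hr.le
  obtain ⟨c, hc⟩ := hlm.2 r (by lia) (by lia)
  refine ⟨c, fun i => ?_⟩
  rw [← mem_twistedRunner_iff (by lia), ← mem_twistedRunner_iff (by lia), hc]
  simp

theorem exists_runner_shift (hlm : HasSameBarQuotient t l m) {r : ℤ} (hr : 2 * |r| < t) :
    ∃ c : ℤ, ∀ i : ℤ, t * (i + c) + r ∈ m.doubledBeads ↔ t * i + r ∈ l.doubledBeads := by
  rcases lt_trichotomy r 0 with hneg | rfl | hpos
  · rw [abs_of_neg hneg] at hr
    obtain ⟨c, hc⟩ := hlm.exists_runner_shift_of_pos (neg_pos.mpr hneg) hr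
    have hne (j : ℤ) : t * j + -r ≠ 0 := by
      intro h0
      have := Int.le_of_dvd (neg_pos.mpr hneg) (⟨-j, by linarith⟩ : (t : ℤ) ∣ -r)
      lia
    refine ⟨-c, fun i => ?_⟩
    rw [show t * (i + -c) + r = -(t * (-i + c) + -r) by ring,
      show t * i + r = -(t * -i + -r) by ring, neg_mem_doubledBeads (hne _),
      neg_mem_doubledBeads (hne _), hc]
  · exact ⟨0, fun i => by simpa using hlm.mem_doubledBeads_iff_of_dvd (dvd_mul_right _ _)⟩
  · exact hlm.exists_runner_shift_of_pos hpos (by rwa [abs_of_pos hpos] at hr)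

theorem exists_runnerShift (ht : Odd t) (hlm : HasSameBarQuotient t l m) :
    ∃ c : ℤ → ℤ, ∀ x, runnerShift t c x ∈ m.doubledBeads ↔ x ∈ l.doubledBeads := by
  choose! c hc using fun r : ℤ => hlm.exists_runner_shift (r := r)
  refine ⟨c, fun x => ?_⟩
  have hbmod : 2 * |x.bmod t| < t := by
    have := Int.le_bmod (x := x) ht.pos
    have := Int.bmod_lt (x := x) ht.pos
    grind
  have hx := hc _ hbmod (x.bdiv t)
  rw [mul_add, add_right_comm, Int.bdiv_add_bmod] at hx
  exact hx

theorem ncard_hookHeads_eq (ht : Odd t) (hlm : HasSameBarQuotient t l m) {h : ℕ} (hth : t ∣ h) :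
    (l.hookHeads h).ncard = (m.hookHeads h).ncard := by
  obtain ⟨c, hc⟩ := hlm.exists_runnerShift ht
  refine Nat.card_congr ((runnerShift t c).subtypeEquiv fun x => ?_)
  simp only [hookHeads, Set.mem_ofPred_eq, ← hc,
    runnerShift_sub_of_dvd c (Int.natCast_dvd_natCast.mpr hth)]

theorem filter_dvd_barLengths_eq (ht : Odd t) (hlm : HasSameBarQuotient t l m) :
    l.barLengths.filter (t ∣ ·) = m.barLengths.filter (t ∣ ·) := by
  ext h
  rw [Multiset.count_filter, Multiset.count_filter]
  split_ifs with hth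
  · rcases h.eq_zero_or_pos with rfl | hh
    · rw [Multiset.count_eq_zero_of_notMem zero_notMem_barLengths,
        Multiset.count_eq_zero_of_notMem zero_notMem_barLengths]
    · have hl := ncard_hookHeads (l := l) hh
      have hm := ncard_hookHeads (l := m) hh
      have hhalf : l.parts.filter (2 * · = h) = m.parts.filter (2 * · = h) :=
        hlm.filter_parts_eq fun a ha => ht.coprime_two_right.dvd_of_dvd_mul_left (ha ▸ hth)
      rw [hlm.ncard_hookHeads_eq ht hth, hhalf] at hl
      simp only [hlm.mem_parts_iff_of_dvd hth] at hl
      lia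
  · rfl

end HasSameBarQuotient

theorem padicValNat_multiset_prod_eq_filter_dvd {p : ℕ} [hp : Fact p.Prime] (s : Multiset ℕ) :
    padicValNat p s.prod = padicValNat p (s.filter (p ∣ ·)).prod := by
  have hnot : ¬ p ∣ (s.filter fun k => ¬ p ∣ k).prod := fun hdvd => by
    obtain ⟨k, hk, hpk⟩ := hp.out.prime.exists_mem_multiset_dvd hdvd
    exact (Multiset.mem_filter.mp hk).2 hpk
  rw [← Multiset.prod_filter_mul_prod_filter_not (p ∣ ·)]
  rcases eq_or_ne (s.filter (p ∣ ·)).prod 0 with h0 | h0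
  · rw [h0, zero_mul]
  · have hne : (s.filter fun k => ¬ p ∣ k).prod ≠ 0 := fun h => hnot (by simp only [h, dvd_zero])
    rw [padicValNat.mul h0 hne, padicValNat.eq_zero_of_not_dvd hnot, add_zero]

theorem padicVal_factorial_sub_barLengthsProd_general {p : ℕ} (hp : p.Prime) (hpodd : Odd p)
    {l μ : BarPartition} {r w : ℕ} (hr : r < p) (hw : l.size = r + p * w)
    (hμ : HasSameBarQuotient p l μ) :
    (padicValNat p (Nat.factorial l.size) : ℤ) - padicValNat p (barLengthsProd l) =
      (padicValNat p (Nat.factorial (p * w)) : ℤ) - padicValNat p (barLengthsProd μ) := by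
  have : Fact p.Prime := ⟨hp⟩
  have hfactorial : padicValNat p l.size.factorial = padicValNat p (p * w).factorial := by
    rw [hw, add_comm, padicValNat_factorial_mul_add w hr]
  have hbars : padicValNat p (barLengthsProd l) = padicValNat p (barLengthsProd μ) := by
    rw [← BarPartition.prod_barLengths, ← BarPartition.prod_barLengths,
      padicValNat_multiset_prod_eq_filter_dvd, hμ.filter_dvd_barLengths_eq hpodd,
      ← padicValNat_multiset_prod_eq_filter_dvd]
  rw [hfactorial, hbars]

/-- Let `p` be an odd prime and `λ` a bar-partition of `n` whose `p`-bar
core has size `r < p` and whose `p`-bar weight is `w` (so `n = r + pw`). Then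
`ν_p(n!) − ν_p(H(λ)) = ν_p((pw)!) − ν_p(H(λ^[p̄]))`. -/
theorem padicVal_factorial_sub_barLengthsProd (p : ℕ) (hp : p.Prime) (hpodd : Odd p)
    (l κ μ : BarPartition) (w : ℕ)
    (hκ : IsBarCoreOf p l κ) (hr : κ.size < p) (hw : l.size = κ.size + p * w)
    (hμ : IsBarCocoreOf p l μ) :
    (padicValNat p (Nat.factorial l.size) : ℤ) - padicValNat p (barLengthsProd l) =
      (padicValNat p (Nat.factorial (p * w)) : ℤ) - padicValNat p (barLengthsProd μ) := by
  exact padicVal_factorial_sub_barLengthsProd_general hp hpodd hr hw hμ.2
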